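/- arXiv:2307.04645 — 4 statements merged into one kernel-verified Lean document; each statement's English description precedes it below -/
import Mathlib

section
/- Let S be a commutative ring, let c ⊆ a be ideals of S, and let x ∈ a. If x is a non-zerodivisor on the quotient ring S/(c : a), then the colon ideals satisfy (c : a) = (c : (c + ⟨x⟩)). -/
section Sup

variable {R M : Type*} [Semiring R] [AddCommMonoid M] [Module R M]

theorem colon_coe_sup (N P Q : Submodule R M) :
    N.colon (↑(P ⊔ Q) : Set M) = N.colon P ⊓ N.colon Q := by
  refine le_antisymm (le_inf (Submodule.colon_mono le_rfl (SetLike.coe_mono le_sup_left))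
    (Submodule.colon_mono le_rfl (SetLike.coe_mono le_sup_right))) ?_
  rintro r ⟨hP, hQ⟩
  refine Submodule.mem_colon.2 fun m hm ↦ ?_
  obtain ⟨p, hp, q, hq, rfl⟩ := Submodule.mem_sup.1 hm
  rw [smul_add]
  exact N.add_mem (Submodule.mem_colon.1 hP p hp) (Submodule.mem_colon.1 hQ q hq)

end Sup

theorem colon_sup_span_singleton {R : Type*} [CommSemiring R] (I : Ideal R) (x : R) :
    I.colon (↑(I ⊔ Ideal.span {x}) : Set R) = I.colon {x} := by
  have hI : I.colon (I : Set R) = ⊤ := (Submodule.colon_eq_top_iff_subset _).2 subset_rfl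
  rw [colon_coe_sup, hI, top_inf_eq, Ideal.colon_span]

section Regular

variable {S : Type*} [CommRing S]

theorem isSMulRegular_quotient_iff_colon_singleton_eq {I : Ideal S} {x : S} :
    IsSMulRegular (S ⧸ I) x ↔ I.colon {x} = I := by
  rw [isSMulRegular_quotient_iff_mem_of_smul_mem, ← Ideal.le_colon.ge_iff_eq']
  simp only [SetLike.le_def, Submodule.mem_colon_singleton, smul_eq_mul, mul_comm]

theorem colon_eq_colon_singleton_of_isSMulRegular {c : Ideal S} {A : Set S} {x : S} (hx : x ∈ A)
    (hreg : IsSMulRegular (S ⧸ c.colon A) x) : c.colon A = c.colon {x} := by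
  refine le_antisymm (Submodule.colon_mono le_rfl (Set.singleton_subset_iff.2 hx)) ?_
  calc c.colon {x}
    _ ≤ (c.colon A).colon {x} := Submodule.colon_mono Ideal.le_colon subset_rfl
    _ = c.colon A := isSMulRegular_quotient_iff_colon_singleton_eq.1 hreg

theorem stmt_1_general (c : Ideal S) (A : Set S) (x : S) (hx : x ∈ A)
    (hreg : IsSMulRegular (S ⧸ c.colon A) x) :
    c.colon A = c.colon (↑(c ⊔ Ideal.span {x}) : Set S) :=
  (colon_eq_colon_singleton_of_isSMulRegular hx hreg).trans (colon_sup_span_singleton c x).symm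

end Regular

/-- Let `S` be a commutative ring, `c ⊆ a` ideals of `S`, and `x ∈ a`.
If `x` is a non-zerodivisor on `S/(c : a)`, then `(c : a) = (c : (c + ⟨x⟩))`. -/
theorem stmt_1 {S : Type*} [CommRing S] (c a : Ideal S) (hca : c ≤ a) (x : S) (hx : x ∈ a)
    (hreg : IsSMulRegular (S ⧸ c.colon a) x) :
    c.colon a = c.colon (c ⊔ Ideal.span {x}) := by
  -- Here `⊔` elaborates in `Set S`, as the union of the two ideals rather than their sum.
  rw [stmt_1_general c a x hx hreg, colon_coe_sup]
  exact Submodule.colon_union.symm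
end

section
/- Let (S, m) be a Noetherian local ring, let p ⊆ S be a prime ideal with p ≠ m, and let J ⊆ p be an ideal with dim(S/J) ≤ 1. Let J^gen = { g ∈ S : there exists s ∈ S \ p with s·g ∈ J } be the p-saturation of J. Then the quotient S/J^gen is a Cohen–Macaulay local ring of Krull dimension 1 (its depth and its Krull dimension both equal 1). -/
/-!
If `T` is a multiplicative set disjoint from `J` and meeting the maximal ideal, then any `x ∈ T ∩ m`
is regular on the nonzero module `S/J^sat`, where `J^sat` is the `T`-saturation, so the depth is at
least `1`. Depth is at most dimension, and `S/J^sat` is a quotient of `S/J`; hence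
`1 ≤ depth ≤ dim ≤ 1`. The theorem is the case `T = S \ p`.

Depth is at most dimension because an element regular on a finite module `M` is a nonzerodivisor
of `R/Ann M`, and dividing out a nonzerodivisor lowers the dimension.
-/

open IsLocalRing

/-- The depth of a module `M` over a local ring `R`: the supremum of the lengths of
`M`-regular sequences consisting of elements of the maximal ideal. -/
noncomputable def moduleDepth (R M : Type*) [CommRing R] [IsLocalRing R]
    [AddCommGroup M] [Module R M] : ℕ∞ :=
  sSup {n : ℕ∞ | ∃ rs : List R, (rs.length : ℕ∞) = n ∧
    (∀ r ∈ rs, r ∈ maximalIdeal R) ∧ RingTheory.Sequence.IsRegular M rs}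

section Saturation

variable {R M : Type*} [CommSemiring R] [AddCommMonoid M] [Module R M]

/-- The saturation of a submodule `N` with respect to a multiplicative set `T`: the elements of the
ambient module that some element of `T` multiplies into `N`. For an ideal and `T` the complement of
a prime ideal `p`, this is the `p`-saturation. -/
def saturation (T : Submonoid R) (N : Submodule R M) : Submodule R M where
  carrier := {m | ∃ s ∈ T, s • m ∈ N}
  zero_mem' := ⟨1, T.one_mem, by simp only [smul_zero, N.zero_mem]⟩
  add_mem' := by
    rintro a b ⟨s, hs, hsa⟩ ⟨t, ht, htb⟩
    refine ⟨s * t, T.mul_mem hs ht, ?_⟩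
    rw [smul_add, mul_comm, mul_smul, mul_comm, mul_smul]
    exact N.add_mem (N.smul_mem t hsa) (N.smul_mem s htb)
  smul_mem' := by
    rintro r m ⟨s, hs, hsm⟩
    exact ⟨s, hs, smul_comm s r m ▸ N.smul_mem r hsm⟩

variable {T : Submonoid R}

theorem mem_saturation {N : Submodule R M} {m : M} :
    m ∈ saturation T N ↔ ∃ s ∈ T, s • m ∈ N :=
  Iff.rfl

theorem le_saturation (N : Submodule R M) : N ≤ saturation T N :=
  fun m hm ↦ ⟨1, T.one_mem, (one_smul R m).symm ▸ hm⟩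

theorem mem_saturation_of_smul_mem {N : Submodule R M} {s : R} (hs : s ∈ T) {m : M}
    (hm : s • m ∈ saturation T N) : m ∈ saturation T N := by
  obtain ⟨t, ht, htm⟩ := hm
  exact ⟨t * s, T.mul_mem ht hs, (mul_smul t s m).symm ▸ htm⟩

theorem saturation_ne_top_iff_disjoint {J : Ideal R} :
    saturation T J ≠ ⊤ ↔ Disjoint (J : Set R) T := by
  rw [Ideal.ne_top_iff_one, mem_saturation, disjoint_comm, Set.disjoint_left]
  simp only [smul_eq_mul, mul_one, not_exists, not_and, SetLike.mem_coe]

end Saturation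

theorem isSMulRegular_quotient_saturation {R M : Type*} [CommRing R] [AddCommGroup M] [Module R M]
    {T : Submonoid R} {s : R} (hs : s ∈ T) (N : Submodule R M) :
    IsSMulRegular (M ⧸ saturation T N) s :=
  (isSMulRegular_quotient_iff_mem_of_smul_mem _ s).mpr fun _ ↦ mem_saturation_of_smul_mem hs

section SupportDim

variable {R M : Type*} [CommRing R] [AddCommGroup M] [Module R M]

theorem mk_annihilator_mem_nonZeroDivisors_of_isSMulRegular {x : R} (hx : IsSMulRegular M x) :
    Ideal.Quotient.mk (Module.annihilator R M) x ∈
      nonZeroDivisors (R ⧸ Module.annihilator R M) := by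
  rw [mem_nonZeroDivisors_iff_right, Ideal.Quotient.mk_surjective.forall]
  intro y hyx
  rw [← map_mul, Ideal.Quotient.eq_zero_iff_mem, Module.mem_annihilator] at hyx
  rw [Ideal.Quotient.eq_zero_iff_mem, Module.mem_annihilator]
  intro m
  exact hx.right_eq_zero_of_smul (by rw [smul_smul, mul_comm, hyx])

variable [Module.Finite R M]

theorem supportDim_quotSMulTop_add_one_le_of_isSMulRegular {x : R} (hx : IsSMulRegular M x) :
    Module.supportDim R (QuotSMulTop x M) + 1 ≤ Module.supportDim R M := by
  have annihilator_le : Module.annihilator R M ≤ Module.annihilator R (QuotSMulTop x M) :=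
    LinearMap.annihilator_le_of_surjective _ (Submodule.mkQ_surjective _)
  rw [Module.supportDim_eq_ringKrullDim_quotient_annihilator,
    Module.supportDim_eq_ringKrullDim_quotient_annihilator]
  exact ringKrullDim_succ_le_of_surjective (Ideal.Quotient.factor annihilator_le)
    (Ideal.Quotient.factor_surjective annihilator_le)
    (mk_annihilator_mem_nonZeroDivisors_of_isSMulRegular hx)
    (Ideal.Quotient.eq_zero_iff_mem.mpr (QuotSMulTop.mem_annihilator M x))

theorem length_le_supportDim_of_isRegular {rs : List R}
    (hrs : RingTheory.Sequence.IsRegular M rs) :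
    (rs.length : WithBot ℕ∞) ≤ Module.supportDim R M := by
  induction rs generalizing M with
  | nil =>
    have := hrs.nontrivial
    rw [List.length_nil, Nat.cast_zero]
    exact Order.krullDim_nonneg_iff.mpr Module.nonempty_support_of_nontrivial.to_subtype
  | cons x rs ih =>
    obtain ⟨hx, hrs⟩ := (RingTheory.Sequence.isRegular_cons_iff M x rs).mp hrs
    calc ((x :: rs).length : WithBot ℕ∞) = rs.length + 1 := by
          rw [List.length_cons, Nat.cast_succ]
      _ ≤ Module.supportDim R (QuotSMulTop x M) + 1 := by gcongr; exact ih hrs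
      _ ≤ Module.supportDim R M := supportDim_quotSMulTop_add_one_le_of_isSMulRegular hx

end SupportDim

section Depth

variable {R M : Type*} [CommRing R] [IsLocalRing R] [AddCommGroup M] [Module R M]
  [Module.Finite R M] [Nontrivial M]

theorem moduleDepth_le_supportDim : (moduleDepth R M : WithBot ℕ∞) ≤ Module.supportDim R M := by
  obtain ⟨d, hd⟩ := WithBot.ne_bot_iff_exists.mp (Module.supportDim_ne_bot_of_nontrivial R M)
  rw [← hd, WithBot.coe_le_coe]
  refine sSup_le ?_
  rintro _ ⟨rs, rfl, -, hrs⟩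
  have length_le := length_le_supportDim_of_isRegular hrs
  rw [← hd] at length_le
  exact_mod_cast length_le

theorem one_le_moduleDepth_of_isSMulRegular {x : R} (hxm : x ∈ maximalIdeal R)
    (hx : IsSMulRegular M x) :
    1 ≤ moduleDepth R M := by
  have mem_maximalIdeal : ∀ r ∈ [x], r ∈ maximalIdeal R := List.forall_mem_singleton.mpr hxm
  exact le_sSup ⟨[x], Nat.cast_one, mem_maximalIdeal,
    .of_isWeaklyRegular_of_mem_maximalIdeal M mem_maximalIdeal
      ((RingTheory.Sequence.isWeaklyRegular_singleton_iff M x).mpr hx)⟩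

theorem moduleDepth_eq_one_and_supportDim_eq_one {x : R} (hxm : x ∈ maximalIdeal R)
    (hx : IsSMulRegular M x) (hdim : Module.supportDim R M ≤ 1) :
    moduleDepth R M = 1 ∧ Module.supportDim R M = 1 := by
  have one_le_depth : 1 ≤ moduleDepth R M := one_le_moduleDepth_of_isSMulRegular hxm hx
  have depth_le_dim : (moduleDepth R M : WithBot ℕ∞) ≤ Module.supportDim R M :=
    moduleDepth_le_supportDim
  have depth_eq : moduleDepth R M = 1 :=
    le_antisymm (WithBot.coe_le_coe.mp (depth_le_dim.trans hdim)) one_le_depth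
  exact ⟨depth_eq, hdim.antisymm ((WithBot.coe_le_coe.mpr one_le_depth).trans depth_le_dim)⟩

end Depth

theorem stmt_5_general {S : Type*} [CommRing S] [IsLocalRing S] (T : Submonoid S)
    (hTm : ∃ x ∈ maximalIdeal S, x ∈ T) (J : Ideal S) (hJT : Disjoint (J : Set S) T)
    (hdimJ : ringKrullDim (S ⧸ J) ≤ 1) :
    moduleDepth S (S ⧸ saturation T J) = 1 ∧ ringKrullDim (S ⧸ saturation T J) = 1 := by
  obtain ⟨x, hxm, hxT⟩ := hTm
  have : Nontrivial (S ⧸ saturation T J) :=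
    Submodule.Quotient.nontrivial_iff.mpr (saturation_ne_top_iff_disjoint.mpr hJT)
  rw [← Module.supportDim_quotient_eq_ringKrullDim] at hdimJ ⊢
  have hdim : Module.supportDim S (S ⧸ saturation T J) ≤ 1 :=
    (Module.supportDim_le_of_surjective (Submodule.factor (le_saturation J))
      (Submodule.factor_surjective (le_saturation J))).trans hdimJ
  exact moduleDepth_eq_one_and_supportDim_eq_one hxm (isSMulRegular_quotient_saturation hxT J) hdim

/-- Let `(S, m)` be a Noetherian local ring, `p` a prime ideal with
`p ≠ m`, and `J ⊆ p` an ideal with `dim (S/J) ≤ 1`. Then `S/J^gen` is Cohen–Macaulay of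
Krull dimension `1`: its depth and Krull dimension both equal `1`, where `J^gen` is the
`p`-saturation of `J`. -/
theorem stmt_5 {S : Type*} [CommRing S] [IsLocalRing S] [IsNoetherianRing S]
    (p : Ideal S) (hp : p.IsPrime) (hpm : p ≠ maximalIdeal S)
    (J : Ideal S) (hJp : J ≤ p)
    (hdimJ : Order.krullDim (PrimeSpectrum (S ⧸ J)) ≤ 1)
    (Jgen : Ideal S) (hgen : ∀ g : S, g ∈ Jgen ↔ ∃ s ∉ p, s * g ∈ J) :
    moduleDepth S (S ⧸ Jgen) = 1 ∧ Order.krullDim (PrimeSpectrum (S ⧸ Jgen)) = 1 := by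
  obtain rfl : Jgen = saturation p.primeCompl J := Ideal.ext hgen
  exact stmt_5_general p.primeCompl
    (SetLike.exists_of_lt ((le_maximalIdeal hp.ne_top).lt_of_ne hpm)) J
    (Set.disjoint_compl_right_iff_subset.mpr hJp) hdimJ
end

section
/- Let (S, m) be a Noetherian local ring, let p ⊆ S be a prime ideal with dim(S/p) = 1, and let J ⊆ S be an ideal with radical √J = p. Let J^gen = { g ∈ S : there exists s ∈ S \ p with s·g ∈ J } be the p-saturation of J. If a is any ideal with J ⊆ a such that S/a is a Cohen–Macaulay local ring of Krull dimension 1, then J^gen ⊆ a. In other words, J^gen is the smallest ideal containing J whose quotient ring is Cohen–Macaulay of dimension 1. -/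
open IsLocalRing

/-!
For `g ∈ J^gen`, say `s * g ∈ J` with `s ∉ p`, the ideal `a : g` contains both `J` and `s`, so every
prime containing it lies strictly above `p` and is therefore maximal, as `dim (S/p) ≤ 1`. Hence
`m ≤ √(a : g)`. Positive depth gives some `x ∈ m` regular on `S/a`; as a power of `x` sends `g` into
`a`, regularity puts `g` itself into `a`.
-/

section

variable {R : Type*} [CommRing R]

theorem isMaximal_of_lt_of_krullDimLE_one_quotient {p q : Ideal R} [p.IsPrime] [q.IsPrime]
    [Ring.KrullDimLE 1 (R ⧸ p)] (hpq : p < q) : q.IsMaximal := by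
  have hker : RingHom.ker (Ideal.Quotient.mk p) ≤ q := Ideal.mk_ker.trans_le hpq.le
  have hprime : (q.map (Ideal.Quotient.mk p)).IsPrime :=
    Ideal.map_isPrime_of_surjective Ideal.Quotient.mk_surjective hker
  have hne_bot : q.map (Ideal.Quotient.mk p) ≠ ⊥ := by
    rw [Ne, Ideal.map_eq_bot_iff_le_ker, Ideal.mk_ker]
    exact hpq.not_ge
  have hmax := hprime.isMaximal_of_ne_bot hne_bot
  rw [← Ideal.comap_map_mk hpq.le]
  exact Ideal.comap_isMaximal_of_surjective _ Ideal.Quotient.mk_surjective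

theorem jacobson_le_radical_of_krullDimLE_one_quotient {p I : Ideal R} [p.IsPrime]
    [Ring.KrullDimLE 1 (R ⧸ p)] (hp : p ≤ I.radical) (hI : ¬ I ≤ p) :
    Ring.jacobson R ≤ I.radical := by
  rw [Ideal.radical_eq_sInf I]
  refine le_sInf fun q ⟨hIq, hq⟩ ↦ ?_
  have hpq : p < q := (hp.trans (hq.radical_le_iff.2 hIq)).lt_of_not_ge fun hqp ↦ hI (hIq.trans hqp)
  have := isMaximal_of_lt_of_krullDimLE_one_quotient hpq
  exact Ring.jacobson_le_of_isMaximal q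

variable {M : Type*} [AddCommGroup M] [Module R M] {N : Submodule R M} {m : M} {x : R}

theorem mem_of_isSMulRegular_quotient_of_mem_radical_colon (hx : IsSMulRegular (M ⧸ N) x)
    (hxm : x ∈ (N.colon {m}).radical) : m ∈ N := by
  obtain ⟨n, hn⟩ := hxm
  exact mem_of_isSMulRegular_quotient_of_smul_mem (hx.pow n) (Submodule.mem_colon_singleton.1 hn)

theorem mem_of_smul_mem_of_notMem_of_le_radical_colon {p : Ideal R} [p.IsPrime]
    [Ring.KrullDimLE 1 (R ⧸ p)] (hx : x ∈ Ring.jacobson R) (hreg : IsSMulRegular (M ⧸ N) x)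
    (hp : p ≤ (N.colon {m}).radical) {s : R} (hs : s ∉ p) (hsm : s • m ∈ N) : m ∈ N := by
  have hcolon : ¬ N.colon {m} ≤ p := fun h ↦ hs (h (Submodule.mem_colon_singleton.2 hsm))
  exact mem_of_isSMulRegular_quotient_of_mem_radical_colon hreg
    (jacobson_le_radical_of_krullDimLE_one_quotient hp hcolon hx)

theorem exists_isSMulRegular_of_moduleDepth_ne_zero [IsLocalRing R] (h : moduleDepth R M ≠ 0) :
    ∃ x ∈ maximalIdeal R, IsSMulRegular M x := by
  contrapose! h
  rw [moduleDepth, ← bot_eq_zero, sSup_eq_bot]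
  rintro _ ⟨rs, rfl, hmem, hrs⟩
  cases rs with
  | nil => rfl
  | cons x rs =>
    exact absurd ((RingTheory.Sequence.isRegular_cons_iff M x rs).1 hrs).1
      (h x (hmem x List.mem_cons_self))

end

theorem stmt_6_general {S : Type*} [CommRing S] [IsLocalRing S] (p : Ideal S) [p.IsPrime]
    [Ring.KrullDimLE 1 (S ⧸ p)] (J : Ideal S) (hrad : p ≤ J.radical)
    (Jgen : Ideal S) (hgen : ∀ g : S, g ∈ Jgen ↔ ∃ s ∉ p, s * g ∈ J)
    (a : Ideal S) (hJa : J ≤ a) (hdepth : moduleDepth S (S ⧸ a) ≠ 0) : Jgen ≤ a := by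
  intro g hg
  obtain ⟨s, hs, hsg⟩ := (hgen g).1 hg
  obtain ⟨x, hx, hreg⟩ := exists_isSMulRegular_of_moduleDepth_ne_zero hdepth
  have hJcolon : J ≤ a.colon {g} := hJa.trans Ideal.le_colon
  rw [← IsLocalRing.ringJacobson_eq_maximalIdeal] at hx
  exact mem_of_smul_mem_of_notMem_of_le_radical_colon hx hreg
    (hrad.trans (Ideal.radical_mono hJcolon)) hs (hJa hsg)

/-- Let `(S, m)` be a Noetherian local ring, `p` a prime ideal with
`dim (S/p) = 1`, and `J` an ideal with `√J = p`. If `a ⊇ J` is any ideal such that `S/a`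
is a Cohen–Macaulay local ring of Krull dimension `1` (depth and dimension both `1`), then
`J^gen ⊆ a`, where `J^gen` is the `p`-saturation of `J`. -/
theorem stmt_6 {S : Type*} [CommRing S] [IsLocalRing S] [IsNoetherianRing S]
    (p : Ideal S) (hp : p.IsPrime)
    (hdimp : Order.krullDim (PrimeSpectrum (S ⧸ p)) = 1)
    (J : Ideal S) (hrad : J.radical = p)
    (Jgen : Ideal S) (hgen : ∀ g : S, g ∈ Jgen ↔ ∃ s ∉ p, s * g ∈ J) :
    ∀ a : Ideal S, J ≤ a →
      moduleDepth S (S ⧸ a) = 1 → Order.krullDim (PrimeSpectrum (S ⧸ a)) = 1 →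
      Jgen ≤ a := by
  intro a hJa hdepth _
  have : Ring.KrullDimLE 1 (S ⧸ p) := Ring.krullDimLE_iff.2 hdimp.le
  exact stmt_6_general p J hrad.ge Jgen hgen a hJa (hdepth ▸ one_ne_zero)
end

section
/- Let R be a commutative ring, let p ⊆ R be a prime ideal, and let t ∈ R be an element such that the principal ideal ⟨t⟩ is prime. Let a ⊆ R be an ideal with a minimal primary decomposition a = q₁ ∩ … ∩ q_k, with radicals p_i = √q_i, ordered so that q₁, …, q_l ⊆ p and q_{l+1}, …, q_k ⊄ p; set b = q₁ ∩ … ∩ q_l (with b = R if l = 0). Then the intersection ∩_{i=l+1}^k p_i (interpreted as R if l = k) is not contained in p ∪ ⟨t⟩ if and only if for every r ∈ b there exists s ∈ R \ (p ∪ ⟨t⟩) with s·r ∈ a. -/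
/-!
The complement of `p ∪ ⟨t⟩` is a multiplicative submonoid `M`. Let `S` be the set of indices
`i > l`. If `s ∈ M` lies in `√q i` for all `i ∈ S`, then some power of `s` lies in `⋂_{i ∈ S} q i`
and multiplies `b` into `a`. Conversely, for `i ∈ S` irredundancy gives some `r ∈ b` outside `q i`;
if `s ∈ M` and `s * r ∈ a ⊆ q i`, then `s ∈ √q i` because `q i` is primary. The product of these `s`
over `S` lies in `M` and in every `√q i`; forming it takes the place of prime avoidance.
-/

section

variable {R ι : Type*} [CommSemiring R] {S : Set ι}

theorem radical_biInf_of_finite (hS : S.Finite) (I : ι → Ideal R) :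
    (⨅ i ∈ S, I i).radical = ⨅ i ∈ S, (I i).radical := by
  lift S to Finset ι using hS
  simpa only [Finset.inf_eq_iInf, Finset.mem_coe, Function.comp_apply,
    Ideal.radicalInfTopHom_apply] using
    map_finset_inf (Ideal.radicalInfTopHom (R := R)) S I

theorem exists_mem_biInf_of_forall_exists_mem (M : Submonoid R) (hS : S.Finite) {I : ι → Ideal R}
    (h : ∀ i ∈ S, ∃ s ∈ M, s ∈ I i) : ∃ s ∈ M, s ∈ ⨅ i ∈ S, I i := by
  choose! s hsM hsI using h
  lift S to Finset ι using hS
  refine ⟨∏ i ∈ S, s i, M.prod_mem hsM, ?_⟩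
  simp only [Submodule.mem_iInf]
  exact fun i hi ↦ (I i).prod_mem hi (hsI i hi)

theorem exists_mul_mem_inf_of_mem_radical {M : Submonoid R} {s r : R} {I J : Ideal R}
    (hsM : s ∈ M) (hsI : s ∈ I.radical) (hr : r ∈ J) : ∃ u ∈ M, u * r ∈ I ⊓ J := by
  obtain ⟨n, hn⟩ := hsI
  exact ⟨s ^ n, pow_mem hsM n, Ideal.mul_mem_right r I hn, Ideal.mul_mem_left J _ hr⟩

theorem exists_mem_radical_of_forall_exists_mul_mem {M : Set R} {J Q : Ideal R}
    (hQ : Q.IsPrimary) (hJQ : ¬ J ≤ Q) (h : ∀ r ∈ J, ∃ s ∈ M, s * r ∈ Q) :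
    ∃ s ∈ M, s ∈ Q.radical := by
  obtain ⟨r, hrJ, hrQ⟩ := SetLike.not_le_iff_exists.1 hJQ
  obtain ⟨s, hsM, hsr⟩ := h r hrJ
  rw [mul_comm] at hsr
  exact ⟨s, hsM, ((Ideal.isPrimary_iff.1 hQ).2 hsr).resolve_left hrQ⟩

theorem stmt_10_general (M : Submonoid R) (hS : S.Finite) (q : ι → Ideal R)
    (hprimary : ∀ i ∈ S, (q i).IsPrimary) (hirredundant : ∀ i ∈ S, ¬ (⨅ j ∈ Sᶜ, q j) ≤ q i) :
    (∃ s ∈ M, s ∈ ⨅ i ∈ S, (q i).radical) ↔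
      ∀ r ∈ ⨅ i ∈ Sᶜ, q i, ∃ s ∈ M, s * r ∈ ⨅ i, q i := by
  constructor
  · rintro ⟨s, hsM, hs⟩ r hr
    rw [← radical_biInf_of_finite hS] at hs
    have hsplit : ⨅ i, q i = (⨅ i ∈ S, q i) ⊓ ⨅ i ∈ Sᶜ, q i := iInf_split q (· ∈ S)
    rw [hsplit]
    exact exists_mul_mem_inf_of_mem_radical hsM hs hr
  · intro h
    refine exists_mem_biInf_of_forall_exists_mem M hS fun i hi ↦ ?_
    refine exists_mem_radical_of_forall_exists_mul_mem (hprimary i hi) (hirredundant i hi)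
      fun r hr ↦ ?_
    obtain ⟨s, hsM, hsr⟩ := h r hr
    exact ⟨s, hsM, iInf_le q i hsr⟩

end

/-- Let `R` be a commutative ring, `p` a prime ideal, and `t ∈ R` with `⟨t⟩`
prime. Let `a = q₁ ∩ … ∩ q_k` be a minimal primary decomposition with radicals `p_i = √q_i`,
ordered so that `q₁, …, q_l ⊆ p` and `q_{l+1}, …, q_k ⊄ p`, and set `b = q₁ ∩ … ∩ q_l`.
Then `∩_{i>l} p_i ⊄ p ∪ ⟨t⟩` iff for every `r ∈ b` there is `s ∈ R \ (p ∪ ⟨t⟩)` with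
`s·r ∈ a`. -/
theorem stmt_10 {R : Type*} [CommRing R] (p : Ideal R) (hp : p.IsPrime)
    (t : R) (ht : (Ideal.span {t} : Ideal R).IsPrime)
    (a : Ideal R) (k l : ℕ) (hlk : l ≤ k) (q : Fin k → Ideal R)
    (hdec : a = ⨅ i, q i)
    (hprimary : ∀ i, (q i).IsPrimary)
    (hdistinct : ∀ i j, i ≠ j → (q i).radical ≠ (q j).radical)
    (hirredundant : ∀ i, ¬ (⨅ j ∈ ({i}ᶜ : Set (Fin k)), q j) ≤ q i)
    (hin : ∀ i : Fin k, (i : ℕ) < l → q i ≤ p)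
    (hout : ∀ i : Fin k, l ≤ (i : ℕ) → ¬ q i ≤ p) :
    ¬ ((⨅ i ∈ {i : Fin k | l ≤ (i : ℕ)}, (q i).radical : Ideal R) : Set R) ⊆
        ((p : Set R) ∪ (Ideal.span {t} : Ideal R)) ↔
      ∀ r ∈ (⨅ i ∈ {i : Fin k | (i : ℕ) < l}, q i : Ideal R),
        ∃ s, s ∉ p ∧ s ∉ (Ideal.span {t} : Ideal R) ∧ s * r ∈ a := by
  simpa [hdec, Set.not_subset, and_comm, and_assoc, Submonoid.mem_inf] using
    stmt_10_general (p.primeCompl ⊓ (Ideal.span {t}).primeCompl)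
      (Set.toFinite {i : Fin k | l ≤ (i : ℕ)}) q (fun i _ ↦ hprimary i) fun i hi hle ↦
        hirredundant i
          ((biInf_mono (Set.compl_subset_compl.2 (Set.singleton_subset_iff.2 hi))).trans hle)
end
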